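/- In the setting of the shell-summation lemmas, for every p ∈ {1,…,p̃}: ∑_{p'=1}^{p−1} Ñ_{p'} ≤ ᾱ·N_{1:p} + χ·Ñ_p. -/

import Mathlib

lemma aux_inj (f : ℕ → ℝ) (hf : ∀ j, 0 ≤ f j) (hs : Summable f) (s : Finset ℕ) (g : ℕ → ℕ)
    (hg : ∀ a ∈ s, ∀ b ∈ s, g a = g b → a = b) : ∑ i ∈ s, f (g i) ≤ ∑' j, f j := by
  classical
  rw [← Finset.sum_image (f := f) (g := g) (fun a ha b hb h => hg a ha b hb h)]
  exact hs.sum_le_tsum _ (fun j _ => hf j)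

/-- key inequality inside the proofs of Lemmas 9 and 10 of the
paper.  In the shell-summation setting (see Statement 7), for every
`p ∈ {1,…,ptil}`:  `∑_{p'=1}^{p-1} Ñ_{p'} ≤ abar N_{1:p} + χ Ñ_p`. -/
theorem stmt_11 (ptil : ℕ) (hptil : 1 ≤ ptil) (N : ℕ → ℝ) (hN : ∀ j, 0 ≤ N j)
    (α : ℕ → ℝ) (hα : ∀ j, 0 < α j) (hsum : Summable α)
    (abar χ : ℝ) (habar : abar = α 0 + 2 * ∑' j : ℕ, α (j + 1))
    (hχ : 0 ≤ χ) (hχα : ∀ j : ℕ, ∑' q : ℕ, α (q + 1 + j) ≤ χ * α j) :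
    ∀ p ∈ Finset.Icc 1 ptil,
      (∑ p' ∈ Finset.Icc 1 (p - 1), ∑ j ∈ Finset.Icc 1 ptil, α (Nat.dist p' j) * N j) ≤
        abar * (∑ j ∈ Finset.Icc 1 p, N j) +
          χ * ∑ j ∈ Finset.Icc 1 ptil, α (Nat.dist p j) * N j := by
  intro p hp
  rw [Finset.mem_Icc] at hp
  have hs1 : ∀ k, Summable (fun q : ℕ => α (q + k)) := fun k => (summable_nat_add_iff k).2 hsum
  have h1 : ∀ j, ∑ p' ∈ Finset.Icc 1 (p - 1), α (Nat.dist p' j) ≤ abar := by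
    intro j
    rw [← Finset.sum_filter_add_sum_filter_not _ (fun p' => p' ≤ j)]
    have ha : ∑ p' ∈ Finset.Icc 1 (p - 1) with p' ≤ j, α (Nat.dist p' j) ≤ ∑' i, α i := by
      apply aux_inj α (fun j => (hα j).le) hsum _ (fun p' => Nat.dist p' j)
      intro a ha b hb h
      simp only [Finset.mem_filter, Nat.dist] at ha hb h
      omega
    have hb : ∑ p' ∈ Finset.Icc 1 (p - 1) with ¬ p' ≤ j, α (Nat.dist p' j)
        ≤ ∑' i, α (i + 1) := by
      refine le_trans (le_of_eq ?_) (aux_inj (fun i => α (i + 1)) (fun j => (hα _).le) (hs1 1)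
        ((Finset.Icc 1 (p - 1)).filter (fun p' => ¬ p' ≤ j)) (fun p' => p' - j - 1) ?_)
      · apply Finset.sum_congr rfl
        intro a ha
        simp only [Finset.mem_filter] at ha
        congr 1
        simp only [Nat.dist]
        omega
      · intro a ha b hb h
        simp only [Finset.mem_filter] at ha hb h
        omega
    have hc := hsum.tsum_eq_zero_add
    linarith
  have h2 : ∀ j, p < j →
      ∑ p' ∈ Finset.Icc 1 (p - 1), α (Nat.dist p' j) ≤ χ * α (Nat.dist p j) := by
    intro j hj
    have hd : Nat.dist p j = j - p := by simp only [Nat.dist]; omega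
    rw [hd]
    refine le_trans ?_ (hχα (j - p))
    refine le_trans (le_of_eq ?_) (aux_inj (fun q => α (q + 1 + (j - p))) (fun j => (hα _).le)
      (by simpa only [add_assoc] using hs1 (1 + (j - p)))
      (Finset.Icc 1 (p - 1)) (fun p' => p - p' - 1) ?_)
    · apply Finset.sum_congr rfl
      intro a ha
      rw [Finset.mem_Icc] at ha
      congr 1
      simp only [Nat.dist]
      omega
    · intro a ha b hb h
      rw [Finset.mem_Icc] at ha hb
      omega
  have hI : Finset.Icc 1 p = (Finset.Icc 1 ptil).filter (fun j => j ≤ p) := by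
    ext a
    simp only [Finset.mem_filter, Finset.mem_Icc]
    omega
  rw [hI, Finset.sum_filter, Finset.sum_comm, Finset.mul_sum, Finset.mul_sum,
    ← Finset.sum_add_distrib]
  apply Finset.sum_le_sum
  intro j _
  rw [← Finset.sum_mul]
  have hpos : 0 ≤ χ * (α (Nat.dist p j) * N j) := mul_nonneg hχ (mul_nonneg (hα _).le (hN j))
  split_ifs with h
  · have := mul_le_mul_of_nonneg_right (h1 j) (hN j)
    linarith
  · have := mul_le_mul_of_nonneg_right (h2 j (by omega)) (hN j)
    linarith
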